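/- Let L_0 ∈ ℝ^{m×n} be an admissible gain, let P_0 be the solution of the stochastic Lyapunov equation for L_0, and define the improved gain L_1 = −(R + Bᵀ P_0 B + Σ_{j=1}^q β̄_j B_jᵀ P_0 B_j)^{-1} Bᵀ P_0 A. Then L_1 is admissible, and the solution P_1 of the stochastic Lyapunov equation for L_1 satisfies P_1 ≤ P_0 in the Loewner order. Moreover, if P* is a symmetric positive semidefinite solution of the stochastic algebraic Riccati equation, then P* ≤ P_1 ≤ P_0. -/

import Mathlib

open Matrix Filter Topology

/-- The sandwich map `X ↦ M * X * Mᵀ` as a linear endomorphism of `n × n` real matrices. -/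
noncomputable def sandwich {n : ℕ} (M : Matrix (Fin n) (Fin n) ℝ) :
    Module.End ℝ (Matrix (Fin n) (Fin n) ℝ) :=
  (LinearMap.mulLeft ℝ M).comp (LinearMap.mulRight ℝ Mᵀ)

/-- The closed-loop covariance operator
`𝒯_L(X) = (A+BL) X (A+BL)ᵀ + Σᵢ ᾱᵢ Aᵢ X Aᵢᵀ + Σⱼ β̄ⱼ (BⱼL) X (BⱼL)ᵀ`. -/
noncomputable def calT {n m p q : ℕ}
    (A : Matrix (Fin n) (Fin n) ℝ) (A' : Fin p → Matrix (Fin n) (Fin n) ℝ)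
    (B : Matrix (Fin n) (Fin m) ℝ) (B' : Fin q → Matrix (Fin n) (Fin m) ℝ)
    (al : Fin p → ℝ) (be : Fin q → ℝ) (L : Matrix (Fin m) (Fin n) ℝ) :
    Module.End ℝ (Matrix (Fin n) (Fin n) ℝ) :=
  sandwich (A + B * L) + ∑ i, al i • sandwich (A' i) + ∑ j, be j • sandwich (B' j * L)

/-- The (trace-)adjoint operator
`𝒯_L^*(P) = (A+BL)ᵀ P (A+BL) + Σᵢ ᾱᵢ Aᵢᵀ P Aᵢ + Σⱼ β̄ⱼ Lᵀ Bⱼᵀ P Bⱼ L`. -/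
noncomputable def calTstar {n m p q : ℕ}
    (A : Matrix (Fin n) (Fin n) ℝ) (A' : Fin p → Matrix (Fin n) (Fin n) ℝ)
    (B : Matrix (Fin n) (Fin m) ℝ) (B' : Fin q → Matrix (Fin n) (Fin m) ℝ)
    (al : Fin p → ℝ) (be : Fin q → ℝ) (L : Matrix (Fin m) (Fin n) ℝ) :
    Module.End ℝ (Matrix (Fin n) (Fin n) ℝ) :=
  sandwich (A + B * L)ᵀ + ∑ i, al i • sandwich (A' i)ᵀ + ∑ j, be j • sandwich (B' j * L)ᵀ

/-- A gain `L` is admissible if the spectral radius of `𝒯_L`, as a linear endomorphism of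
the space of `n × n` real matrices, is strictly less than `1`. -/
noncomputable def Admissible {n m p q : ℕ}
    (A : Matrix (Fin n) (Fin n) ℝ) (A' : Fin p → Matrix (Fin n) (Fin n) ℝ)
    (B : Matrix (Fin n) (Fin m) ℝ) (B' : Fin q → Matrix (Fin n) (Fin m) ℝ)
    (al : Fin p → ℝ) (be : Fin q → ℝ) (L : Matrix (Fin m) (Fin n) ℝ) : Prop :=
  spectralRadius ℝ (calT A A' B B' al be L) < 1

lemma neumann_pos {V : Type*} [NormedAddCommGroup V] [NormedSpace ℝ V] [CompleteSpace V]
    (K : Set V) (hKc : IsClosed K) (h0 : (0 : V) ∈ K)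
    (hadd : ∀ x ∈ K, ∀ y ∈ K, x + y ∈ K)
    (P : V →L[ℝ] V) (hP : ∀ x ∈ K, P x ∈ K) (hn : ‖P‖ < 1) (y : V) (hy : y ∈ K) :
    ∃ x ∈ K, x - P x = y := by
  have hs := hasSum_geom_series_inverse P hn
  have hunit : (1 - P) * Ring.inverse (1 - P) = 1 :=
    Ring.mul_inverse_cancel _ (Units.oneSub P hn).isUnit
  refine ⟨Ring.inverse (1 - P) y, ?_, ?_⟩
  · have h2 : HasSum (fun n : ℕ => (P ^ n) y) (Ring.inverse (1 - P) y) :=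
      hs.mapL (ContinuousLinearMap.apply ℝ V y)
    have hpow : ∀ k : ℕ, (P ^ k) y ∈ K := by
      intro k
      induction k with
      | zero => simpa using hy
      | succ k ih =>
        rw [pow_succ']
        exact hP _ ih
    refine hKc.mem_of_tendsto h2 (Eventually.of_forall fun s => ?_)
    exact Finset.sum_induction _ (· ∈ K) (fun a b ha hb => hadd a ha b hb) h0 (fun k _ => hpow k)
  · have := congrArg (fun F : V →L[ℝ] V => F y) hunit
    simpa using this

lemma resolvent_pos {V : Type*} [NormedAddCommGroup V] [NormedSpace ℝ V] [FiniteDimensional ℝ V]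
    (K : Set V) (hKc : IsClosed K) (h0 : (0 : V) ∈ K)
    (hadd : ∀ x ∈ K, ∀ y ∈ K, x + y ∈ K) (hsmul : ∀ c : ℝ, 0 ≤ c → ∀ x ∈ K, c • x ∈ K)
    (T : Module.End ℝ V) (hT : ∀ x ∈ K, T x ∈ K)
    (hs : ∀ s : ℝ, 1 ≤ s → s ∉ spectrum ℝ T) (y : V) (hy : y ∈ K) :
    ∃ x ∈ K, x - T x = y := by
  have : CompleteSpace V := FiniteDimensional.complete ℝ V
  set C : V →L[ℝ] V := Module.End.toContinuousLinearMap V T with hC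
  have hCT : ∀ x, C x = T x := fun x => rfl
  have hu : ∀ s : ℝ, 1 ≤ s → IsUnit (algebraMap ℝ (V →L[ℝ] V) s - C) := by
    intro s h1
    have := hs s h1
    rw [← AlgEquiv.spectrum_eq (Module.End.toContinuousLinearMap V) T] at this
    exact spectrum.notMem_iff.mp this
  set Rs : ℝ → (V →L[ℝ] V) := fun s => Ring.inverse (algebraMap ℝ (V →L[ℝ] V) s - C) with hRs
  have hR1 : ∀ s : ℝ, 1 ≤ s → ∀ x, s • Rs s x - C (Rs s x) = x := by
    intro s h1 x
    have := congrArg (fun F : V →L[ℝ] V => F x) (Ring.mul_inverse_cancel _ (hu s h1))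
    simpa [Algebra.algebraMap_eq_smul_one, hRs] using this
  have hR2 : ∀ s : ℝ, 1 ≤ s → ∀ x, Rs s (s • x - C x) = x := by
    intro s h1 x
    have := congrArg (fun F : V →L[ℝ] V => F x) (Ring.inverse_mul_cancel _ (hu s h1))
    simpa [Algebra.algebraMap_eq_smul_one, hRs] using this
  set M : ℝ := ‖C‖ + 1 with hM
  have hM1 : 1 ≤ M := by simp [hM]
  -- the good set
  set S : Set ℝ := {t | ∀ y ∈ K, Rs (M - t) y ∈ K} with hS
  have hclosed : IsClosed (S ∩ Set.Icc 0 (M - 1)) := by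
    have hcont : ∀ y, ContinuousOn (fun t => Rs (M - t) y) (Set.Icc 0 (M - 1)) := by
      intro y t ht
      have h1 : 1 ≤ M - t := by linarith [ht.2]
      obtain ⟨u, hu'⟩ := hu _ h1
      have hc := NormedRing.inverse_continuousAt u
      rw [hu'] at hc
      have hc2 : ContinuousAt (fun t : ℝ => algebraMap ℝ (V →L[ℝ] V) (M - t) - C) t := by
        simp only [Algebra.algebraMap_eq_smul_one]
        fun_prop
      have hc3 : ContinuousAt (fun t : ℝ => Rs (M - t)) t :=
        ContinuousAt.comp (f := fun t : ℝ => algebraMap ℝ (V →L[ℝ] V) (M - t) - C) hc hc2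
      exact (hc3.clm_apply continuousAt_const).continuousWithinAt
    have : S ∩ Set.Icc 0 (M - 1) =
        Set.Icc 0 (M - 1) ∩ ⋂ y ∈ K, (Set.Icc 0 (M - 1) ∩ (fun t => Rs (M - t) y) ⁻¹' K) := by
      ext t
      simp only [hS, Set.mem_inter_iff, Set.mem_ofPred_eq, Set.mem_iInter, Set.mem_preimage]
      exact ⟨fun h => ⟨h.2, fun i hi => ⟨h.2, h.1 i hi⟩⟩,
        fun h => ⟨fun i hi => (h.2 i hi).2, h.1⟩⟩
    rw [this]
    exact isClosed_Icc.inter (isClosed_biInter fun y _ =>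
      (hcont y).preimage_isClosed_of_isClosed isClosed_Icc hKc)
  have hstart : (0 : ℝ) ∈ S := by
    intro y hy
    have hMpos : 0 < M := by linarith
    obtain ⟨x, hx, hxy⟩ := neumann_pos K hKc h0 hadd (M⁻¹ • C)
      (fun x hx => hsmul _ (by positivity) _ (hT x hx))
      (by
        rw [norm_smul, Real.norm_of_nonneg (by positivity), inv_mul_lt_iff₀ hMpos]
        simp [hM]) (M⁻¹ • y) (hsmul _ (by positivity) _ hy)
    have : M • x - C x = y := by
      have := congrArg (fun z => M • z) hxy
      simpa [smul_sub, smul_smul, hMpos.ne'] using this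
    rw [sub_zero, ← this, hR2 M hM1]
    exact hx
  have hsub := hclosed.Icc_subset_of_forall_exists_gt hstart (by
    rintro t ⟨htS, ht⟩ z hz
    have hz : t < z := hz
    set s := M - t with hs'
    have hs1 : 1 ≤ s := by linarith [ht.2]
    set N := ‖Rs s‖ with hN
    have hN0 : 0 ≤ N := norm_nonneg _
    set ε := min (min (z - t) (M - 1 - t)) (1 / (N + 1)) with hε
    have hε0 : 0 < ε := by
      have := ht.2
      simp only [hε, lt_min_iff]
      refine ⟨⟨by linarith, by linarith⟩, by positivity⟩
    have e1 : ε ≤ z - t := (min_le_left _ _).trans (min_le_left _ _)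
    have e2 : ε ≤ M - 1 - t := (min_le_left _ _).trans (min_le_right _ _)
    have e3 : ε ≤ 1 / (N + 1) := min_le_right _ _
    refine ⟨t + ε, ?_, ⟨by linarith, by linarith⟩⟩
    intro y hy
    obtain ⟨x, hx, hxy⟩ := neumann_pos K hKc h0 hadd (ε • Rs s)
      (fun x hx => hsmul _ hε0.le _ (htS x hx))
      (by
        rw [norm_smul, Real.norm_of_nonneg hε0.le]
        calc ε * ‖Rs s‖ ≤ 1 / (N + 1) * N := by gcongr
          _ < 1 := by rw [one_div, inv_mul_lt_iff₀ (by positivity)]; linarith) (Rs s y) (htS y hy)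
    have hxe : (M - (t + ε)) • x - C x = y := by
      have h1 := congrArg (fun z => s • z - C z) hxy
      simp only [hR1 s hs1] at h1
      rw [← h1]
      have h2 := hR1 s hs1 x
      have h3 : M - (t + ε) = s - ε := by rw [hs']; ring
      have h4 : s • (x - (ε • Rs s) x) - C (x - (ε • Rs s) x)
        = s • x - C x - ε • (s • Rs s x - C (Rs s x)) := by
        simp only [_root_.smul_apply, map_sub, map_smul, smul_sub]
        rw [smul_comm s ε]; abel
      rw [h4, h2, h3, sub_smul]; abel
    show Rs (M - (t + ε)) y ∈ K
    rw [← hxe, hR2 _ (by linarith)]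
    exact hx)
  have hend := hsub (show M - 1 ∈ Set.Icc 0 (M - 1) from ⟨by linarith, le_rfl⟩) y hy
  refine ⟨_, hend, ?_⟩
  have := hR1 (M - (M - 1)) (by linarith) y
  simpa [hCT] using this

section helpers
variable {n m p q : ℕ}

lemma calT_apply (A : Matrix (Fin n) (Fin n) ℝ) (A' : Fin p → Matrix (Fin n) (Fin n) ℝ)
    (B : Matrix (Fin n) (Fin m) ℝ) (B' : Fin q → Matrix (Fin n) (Fin m) ℝ)
    (al : Fin p → ℝ) (be : Fin q → ℝ) (L : Matrix (Fin m) (Fin n) ℝ)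
    (X : Matrix (Fin n) (Fin n) ℝ) :
    calT A A' B B' al be L X = (A + B * L) * X * (A + B * L)ᵀ
      + ∑ i, al i • (A' i * X * (A' i)ᵀ) + ∑ j, be j • (B' j * L * X * (B' j * L)ᵀ) := by
  simp [calT, sandwich, LinearMap.sum_apply, Matrix.mul_assoc]

lemma calTstar_apply (A : Matrix (Fin n) (Fin n) ℝ) (A' : Fin p → Matrix (Fin n) (Fin n) ℝ)
    (B : Matrix (Fin n) (Fin m) ℝ) (B' : Fin q → Matrix (Fin n) (Fin m) ℝ)
    (al : Fin p → ℝ) (be : Fin q → ℝ) (L : Matrix (Fin m) (Fin n) ℝ)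
    (X : Matrix (Fin n) (Fin n) ℝ) :
    calTstar A A' B B' al be L X = (A + B * L)ᵀ * X * (A + B * L)
      + ∑ i, al i • ((A' i)ᵀ * X * A' i) + ∑ j, be j • ((B' j * L)ᵀ * X * (B' j * L)) := by
  simp [calTstar, sandwich, LinearMap.sum_apply, Matrix.mul_assoc]

lemma psd_iff (M : Matrix (Fin n) (Fin n) ℝ) :
    M.PosSemidef ↔ Mᵀ = M ∧ ∀ x : Fin n → ℝ, 0 ≤ x ⬝ᵥ (M *ᵥ x) := by
  rw [posSemidef_iff_dotProduct_mulVec]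
  simp [Matrix.IsHermitian]

lemma psd_conj {k l : ℕ} {P : Matrix (Fin k) (Fin k) ℝ} (hP : P.PosSemidef)
    (M : Matrix (Fin k) (Fin l) ℝ) : (Mᵀ * P * M).PosSemidef := by
  simpa using hP.conjTranspose_mul_mul_same M

lemma psd_conj' {k l : ℕ} {P : Matrix (Fin k) (Fin k) ℝ} (hP : P.PosSemidef)
    (M : Matrix (Fin l) (Fin k) ℝ) : (M * P * Mᵀ).PosSemidef := by
  simpa using hP.mul_mul_conjTranspose_same M

lemma trace_mul_vecMulVec (D : Matrix (Fin n) (Fin n) ℝ) (v w : Fin n → ℝ) :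
    (D * vecMulVec v w).trace = w ⬝ᵥ (D *ᵥ v) := by
  rw [Matrix.mul_vecMulVec, Matrix.trace_vecMulVec, dotProduct_comm]

open scoped MatrixOrder in
lemma trace_mul_psd_nonneg {D X : Matrix (Fin n) (Fin n) ℝ} (hD : D.PosSemidef)
    (hX : X.PosSemidef) : 0 ≤ (D * X).trace := by
  obtain ⟨C, rfl⟩ : ∃ C : Matrix (Fin n) (Fin n) ℝ, D = Cᴴ * C := by
    obtain ⟨C, hC⟩ := CStarAlgebra.nonneg_iff_eq_star_mul_self.mp (Matrix.nonneg_iff_posSemidef.mpr hD)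
    exact ⟨C, hC⟩
  rw [Matrix.mul_assoc, Matrix.trace_mul_comm]
  exact (hX.mul_mul_conjTranspose_same C).trace_nonneg

lemma trace_adj (A : Matrix (Fin n) (Fin n) ℝ) (A' : Fin p → Matrix (Fin n) (Fin n) ℝ)
    (B : Matrix (Fin n) (Fin m) ℝ) (B' : Fin q → Matrix (Fin n) (Fin m) ℝ)
    (al : Fin p → ℝ) (be : Fin q → ℝ) (L : Matrix (Fin m) (Fin n) ℝ)
    (D X : Matrix (Fin n) (Fin n) ℝ) :
    (D * calT A A' B B' al be L X).trace = (calTstar A A' B B' al be L D * X).trace := by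
  have key : ∀ M : Matrix (Fin n) (Fin n) ℝ, (D * (M * X * Mᵀ)).trace = (Mᵀ * D * M * X).trace := by
    intro M
    rw [← Matrix.mul_assoc, Matrix.trace_mul_comm, ← Matrix.mul_assoc, ← Matrix.mul_assoc]
  rw [calT_apply, calTstar_apply]
  generalize A + B * L = Acl
  simp only [Matrix.mul_add, Matrix.add_mul _ _ X, Matrix.trace_add, key, Finset.mul_sum,
    Finset.sum_mul, Matrix.trace_sum, Matrix.mul_smul, Matrix.smul_mul, Matrix.trace_smul]

lemma calT_psd (A : Matrix (Fin n) (Fin n) ℝ) (A' : Fin p → Matrix (Fin n) (Fin n) ℝ)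
    (B : Matrix (Fin n) (Fin m) ℝ) (B' : Fin q → Matrix (Fin n) (Fin m) ℝ)
    (al : Fin p → ℝ) (be : Fin q → ℝ) (hal : ∀ i, 0 ≤ al i) (hbe : ∀ j, 0 ≤ be j)
    (L : Matrix (Fin m) (Fin n) ℝ) (X : Matrix (Fin n) (Fin n) ℝ) (hX : X.PosSemidef) :
    (calT A A' B B' al be L X).PosSemidef := by
  rw [calT_apply]
  exact ((psd_conj' hX _).add (posSemidef_sum _ fun i _ => (psd_conj' hX _).smul (hal i))).add
    (posSemidef_sum _ fun j _ => (psd_conj' hX _).smul (hbe j))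

lemma calTstar_psd (A : Matrix (Fin n) (Fin n) ℝ) (A' : Fin p → Matrix (Fin n) (Fin n) ℝ)
    (B : Matrix (Fin n) (Fin m) ℝ) (B' : Fin q → Matrix (Fin n) (Fin m) ℝ)
    (al : Fin p → ℝ) (be : Fin q → ℝ) (hal : ∀ i, 0 ≤ al i) (hbe : ∀ j, 0 ≤ be j)
    (L : Matrix (Fin m) (Fin n) ℝ) (X : Matrix (Fin n) (Fin n) ℝ) (hX : X.PosSemidef) :
    (calTstar A A' B B' al be L X).PosSemidef := by
  rw [calTstar_apply]
  exact ((psd_conj hX _).add (posSemidef_sum _ fun i _ => (psd_conj hX _).smul (hal i))).add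
    (posSemidef_sum _ fun j _ => (psd_conj hX _).smul (hbe j))

lemma calTstar_transpose (A : Matrix (Fin n) (Fin n) ℝ) (A' : Fin p → Matrix (Fin n) (Fin n) ℝ)
    (B : Matrix (Fin n) (Fin m) ℝ) (B' : Fin q → Matrix (Fin n) (Fin m) ℝ)
    (al : Fin p → ℝ) (be : Fin q → ℝ)
    (L : Matrix (Fin m) (Fin n) ℝ) (X : Matrix (Fin n) (Fin n) ℝ) :
    (calTstar A A' B B' al be L X)ᵀ = calTstar A A' B B' al be L Xᵀ := by
  rw [calTstar_apply, calTstar_apply]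
  simp only [Matrix.transpose_add, Matrix.transpose_sum, Matrix.transpose_smul,
    Matrix.transpose_mul, Matrix.transpose_transpose, Matrix.mul_assoc]

lemma adm_not_mem (A : Matrix (Fin n) (Fin n) ℝ) (A' : Fin p → Matrix (Fin n) (Fin n) ℝ)
    (B : Matrix (Fin n) (Fin m) ℝ) (B' : Fin q → Matrix (Fin n) (Fin m) ℝ)
    (al : Fin p → ℝ) (be : Fin q → ℝ) (L : Matrix (Fin m) (Fin n) ℝ)
    (h : Admissible A A' B B' al be L) (s : ℝ) (hs : 1 ≤ s) :
    s ∉ spectrum ℝ (calT A A' B B' al be L) := by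
  intro hmem
  have h1 : (‖s‖₊ : ENNReal) ≤ spectralRadius ℝ (calT A A' B B' al be L) :=
    le_iSup₂ (α := ENNReal) s hmem
  have h2 : (‖s‖₊ : ENNReal) < 1 := lt_of_le_of_lt h1 h
  have h3 : ‖s‖₊ < 1 := by exact_mod_cast h2
  have h4 : ‖s‖ < 1 := by exact_mod_cast h3
  rw [Real.norm_eq_abs] at h4
  linarith [le_abs_self s]

lemma isClosed_psd : IsClosed {M : Matrix (Fin n) (Fin n) ℝ | M.PosSemidef} := by
  have : {M : Matrix (Fin n) (Fin n) ℝ | M.PosSemidef} =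
      {M | Mᵀ = M} ∩ ⋂ x : Fin n → ℝ, {M | 0 ≤ x ⬝ᵥ (M *ᵥ x)} := by
    ext M
    simp [psd_iff]
  rw [this]
  refine (isClosed_eq (by fun_prop) (by fun_prop)).inter (isClosed_iInter fun x => ?_)
  exact isClosed_le continuous_const (by fun_prop)

attribute [local instance] Matrix.normedAddCommGroup Matrix.normedSpace in
lemma adm_resolvent (A : Matrix (Fin n) (Fin n) ℝ) (A' : Fin p → Matrix (Fin n) (Fin n) ℝ)
    (B : Matrix (Fin n) (Fin m) ℝ) (B' : Fin q → Matrix (Fin n) (Fin m) ℝ)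
    (al : Fin p → ℝ) (be : Fin q → ℝ) (hal : ∀ i, 0 ≤ al i) (hbe : ∀ j, 0 ≤ be j)
    (L : Matrix (Fin m) (Fin n) ℝ)
    (h : Admissible A A' B B' al be L) (Y : Matrix (Fin n) (Fin n) ℝ) (hY : Y.PosSemidef) :
    ∃ X : Matrix (Fin n) (Fin n) ℝ, X.PosSemidef ∧ X - calT A A' B B' al be L X = Y :=
  resolvent_pos {M : Matrix (Fin n) (Fin n) ℝ | M.PosSemidef} isClosed_psd PosSemidef.zero
    (fun _ hx _ hy => PosSemidef.add hx hy) (fun _ hc _ hx => PosSemidef.smul hx hc)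
    (calT A A' B B' al be L) (fun x hx => calT_psd A A' B B' al be hal hbe L x hx)
    (adm_not_mem A A' B B' al be L h) Y hY

lemma adm_surj (A : Matrix (Fin n) (Fin n) ℝ) (A' : Fin p → Matrix (Fin n) (Fin n) ℝ)
    (B : Matrix (Fin n) (Fin m) ℝ) (B' : Fin q → Matrix (Fin n) (Fin m) ℝ)
    (al : Fin p → ℝ) (be : Fin q → ℝ)
    (L : Matrix (Fin m) (Fin n) ℝ)
    (h : Admissible A A' B B' al be L) (Y : Matrix (Fin n) (Fin n) ℝ) :
    ∃ X : Matrix (Fin n) (Fin n) ℝ, X - calT A A' B B' al be L X = Y := by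
  have h1 := spectrum.notMem_iff.mp (adm_not_mem A A' B B' al be L h 1 le_rfl)
  obtain ⟨X, hX⟩ := ((Module.End.isUnit_iff _).mp h1).2 Y
  exact ⟨X, by simpa using hX⟩

lemma adm_inj_star (A : Matrix (Fin n) (Fin n) ℝ) (A' : Fin p → Matrix (Fin n) (Fin n) ℝ)
    (B : Matrix (Fin n) (Fin m) ℝ) (B' : Fin q → Matrix (Fin n) (Fin m) ℝ)
    (al : Fin p → ℝ) (be : Fin q → ℝ)
    (L : Matrix (Fin m) (Fin n) ℝ)
    (h : Admissible A A' B B' al be L) (D : Matrix (Fin n) (Fin n) ℝ)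
    (hD : D - calTstar A A' B B' al be L D = 0) : D = 0 := by
  obtain ⟨Y, hY⟩ := adm_surj A A' B B' al be L h Dᵀ
  have h1 : (D * Dᵀ).trace = 0 := by
    rw [← hY, Matrix.mul_sub, Matrix.trace_sub, trace_adj, ← Matrix.trace_sub, ← Matrix.sub_mul, hD]
    simp
  have := Matrix.trace_mul_conjTranspose_self_eq_zero_iff (A := D)
  rw [Matrix.conjTranspose_eq_transpose_of_trivial] at this
  exact this.mp h1

lemma adm_surj_star (A : Matrix (Fin n) (Fin n) ℝ) (A' : Fin p → Matrix (Fin n) (Fin n) ℝ)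
    (B : Matrix (Fin n) (Fin m) ℝ) (B' : Fin q → Matrix (Fin n) (Fin m) ℝ)
    (al : Fin p → ℝ) (be : Fin q → ℝ)
    (L : Matrix (Fin m) (Fin n) ℝ)
    (h : Admissible A A' B B' al be L) (W : Matrix (Fin n) (Fin n) ℝ) :
    ∃ D, D - calTstar A A' B B' al be L D = W := by
  have hinj : Function.Injective (LinearMap.id - calTstar A A' B B' al be L :
      Matrix (Fin n) (Fin n) ℝ →ₗ[ℝ] Matrix (Fin n) (Fin n) ℝ) := by
    rw [injective_iff_map_eq_zero]
    intro D hD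
    exact adm_inj_star A A' B B' al be L h D (by simpa using hD)
  obtain ⟨D, hD⟩ := LinearMap.injective_iff_surjective.mp hinj W
  exact ⟨D, by simpa using hD⟩

lemma adm_lyap (A : Matrix (Fin n) (Fin n) ℝ) (A' : Fin p → Matrix (Fin n) (Fin n) ℝ)
    (B : Matrix (Fin n) (Fin m) ℝ) (B' : Fin q → Matrix (Fin n) (Fin m) ℝ)
    (al : Fin p → ℝ) (be : Fin q → ℝ) (hal : ∀ i, 0 ≤ al i) (hbe : ∀ j, 0 ≤ be j)
    (L : Matrix (Fin m) (Fin n) ℝ)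
    (h : Admissible A A' B B' al be L) (D : Matrix (Fin n) (Fin n) ℝ)
    (hD : (D - calTstar A A' B B' al be L D).PosSemidef) : D.PosSemidef := by
  rw [psd_iff]
  constructor
  · refine sub_eq_zero.mp (adm_inj_star A A' B B' al be L h _ ?_)
    have h1 := ((psd_iff _).mp hD).1
    rw [Matrix.transpose_sub, calTstar_transpose] at h1
    rw [map_sub]
    rw [sub_sub_sub_comm, h1, sub_self]
  · intro x
    obtain ⟨Y, hY, hYe⟩ := adm_resolvent A A' B B' al be hal hbe L h (vecMulVec x x)
      (by simpa using posSemidef_vecMulVec_self_star x)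
    rw [← trace_mul_vecMulVec, ← hYe, Matrix.mul_sub, Matrix.trace_sub, trace_adj,
      ← Matrix.trace_sub, ← Matrix.sub_mul]
    exact trace_mul_psd_nonneg hD hY

/-- `V` is dominated by `X`. -/
def Dom (V X : Matrix (Fin n) (Fin n) ℝ) : Prop :=
  ∀ u v : Fin n → ℝ, 2 * (u ⬝ᵥ (V *ᵥ v)) ≤ u ⬝ᵥ (X *ᵥ u) + v ⬝ᵥ (X *ᵥ v)

lemma dom_conj {V X : Matrix (Fin n) (Fin n) ℝ} (h : Dom V X) (M : Matrix (Fin n) (Fin n) ℝ) :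
    Dom (M * V * Mᵀ) (M * X * Mᵀ) := by
  intro u v
  have key : ∀ (Z : Matrix (Fin n) (Fin n) ℝ) (a b : Fin n → ℝ),
      a ⬝ᵥ ((M * Z * Mᵀ) *ᵥ b) = (Mᵀ *ᵥ a) ⬝ᵥ (Z *ᵥ (Mᵀ *ᵥ b)) := by
    intro Z a b
    rw [← Matrix.mulVec_mulVec, ← Matrix.mulVec_mulVec, Matrix.dotProduct_mulVec,
      Matrix.mulVec_transpose M a]
  simp only [key]
  exact h _ _

lemma dom_add {V X V' X' : Matrix (Fin n) (Fin n) ℝ} (h : Dom V X) (h' : Dom V' X') :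
    Dom (V + V') (X + X') := by
  intro u v
  have := h u v
  have := h' u v
  simp only [Matrix.add_mulVec, dotProduct_add]
  linarith

lemma dom_smul {V X : Matrix (Fin n) (Fin n) ℝ} (h : Dom V X) {c : ℝ} (hc : 0 ≤ c) :
    Dom (c • V) (c • X) := by
  intro u v
  have := mul_le_mul_of_nonneg_left (h u v) hc
  simp only [Matrix.smul_mulVec, dotProduct_smul, smul_eq_mul]
  linarith

lemma dom_sum {k : ℕ} {V X : Fin k → Matrix (Fin n) (Fin n) ℝ} (h : ∀ i, Dom (V i) (X i)) :
    Dom (∑ i, V i) (∑ i, X i) := by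
  classical
  have : ∀ s : Finset (Fin k), Dom (∑ i ∈ s, V i) (∑ i ∈ s, X i) := by
    intro s
    induction s using Finset.induction_on with
    | empty => intro u v; simp
    | insert a s ha ih =>
      rw [Finset.sum_insert ha, Finset.sum_insert ha]
      exact dom_add (h a) ih
  exact this _

lemma dom_calT (A : Matrix (Fin n) (Fin n) ℝ) (A' : Fin p → Matrix (Fin n) (Fin n) ℝ)
    (B : Matrix (Fin n) (Fin m) ℝ) (B' : Fin q → Matrix (Fin n) (Fin m) ℝ)
    (al : Fin p → ℝ) (be : Fin q → ℝ) (hal : ∀ i, 0 ≤ al i) (hbe : ∀ j, 0 ≤ be j)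
    (L : Matrix (Fin m) (Fin n) ℝ) (V X : Matrix (Fin n) (Fin n) ℝ) (h : Dom V X) :
    Dom (calT A A' B B' al be L V) (calT A A' B B' al be L X) := by
  rw [calT_apply, calT_apply]
  exact dom_add (dom_add (dom_conj h _) (dom_sum fun i => dom_smul (dom_conj h _) (hal i)))
    (dom_sum fun j => dom_smul (dom_conj h _) (hbe j))

lemma dom_init (V : Matrix (Fin n) (Fin n) ℝ) : Dom V (V * Vᵀ + 1) := by
  intro u v
  have e1 : u ⬝ᵥ (V *ᵥ v) = (Vᵀ *ᵥ u) ⬝ᵥ v := by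
    rw [Matrix.dotProduct_mulVec, Matrix.mulVec_transpose]
  have e2 : ∀ w, w ⬝ᵥ ((V * Vᵀ + 1) *ᵥ w) = (Vᵀ *ᵥ w) ⬝ᵥ (Vᵀ *ᵥ w) + w ⬝ᵥ w := by
    intro w
    rw [Matrix.add_mulVec, dotProduct_add, Matrix.one_mulVec, ← Matrix.mulVec_mulVec,
      Matrix.dotProduct_mulVec, Matrix.mulVec_transpose V w]
  have h0 : ∀ w : Fin n → ℝ, 0 ≤ w ⬝ᵥ w := fun w => by
    simpa using dotProduct_star_self_nonneg w
  have h1 := h0 (Vᵀ *ᵥ u - v)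
  rw [sub_dotProduct, dotProduct_sub, dotProduct_sub, dotProduct_comm v (Vᵀ *ᵥ u)] at h1
  rw [e1, e2, e2]
  linarith [h0 u, h0 (Vᵀ *ᵥ v)]

/-- If `μ V` is dominated by `X`, with `1 ≤ |μ|`, then so is `V`. -/
lemma dom_scale {V X : Matrix (Fin n) (Fin n) ℝ} {μ : ℝ} (hμ : 1 ≤ |μ|) (h : Dom (μ • V) X) :
    Dom V X := by
  intro u v
  have h1 := h u v
  have h2 := h (-u) v
  simp only [Matrix.smul_mulVec, dotProduct_smul, smul_eq_mul, neg_dotProduct, Matrix.mulVec_neg,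
    dotProduct_neg, neg_neg] at h1 h2
  have h3 : 2 * |μ * (u ⬝ᵥ (V *ᵥ v))| ≤ u ⬝ᵥ (X *ᵥ u) + v ⬝ᵥ (X *ᵥ v) := by
    rcases abs_cases (μ * (u ⬝ᵥ (V *ᵥ v))) with h | h <;> linarith [h.1]
  rw [abs_mul] at h3
  have h4 := le_abs_self (u ⬝ᵥ (V *ᵥ v))
  nlinarith [abs_nonneg (u ⬝ᵥ (V *ᵥ v))]

/-- A strict Lyapunov function yields admissibility. -/
lemma adm_of_lyap (A : Matrix (Fin n) (Fin n) ℝ) (A' : Fin p → Matrix (Fin n) (Fin n) ℝ)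
    (B : Matrix (Fin n) (Fin m) ℝ) (B' : Fin q → Matrix (Fin n) (Fin m) ℝ)
    (al : Fin p → ℝ) (be : Fin q → ℝ) (hal : ∀ i, 0 ≤ al i) (hbe : ∀ j, 0 ≤ be j)
    (L : Matrix (Fin m) (Fin n) ℝ) (E : Matrix (Fin n) (Fin n) ℝ) (hE : E.PosSemidef)
    (hE1 : (E - calTstar A A' B B' al be L E - 1).PosSemidef) :
    Admissible A A' B B' al be L := by
  set T := calT A A' B B' al be L with hT
  have hev : ∀ μ ∈ spectrum ℝ T, |μ| < 1 := by
    intro μ hμ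
    by_contra hcon
    push Not at hcon
    obtain ⟨V, hV⟩ := (Module.End.hasEigenvalue_iff_mem_spectrum.mpr hμ).exists_hasEigenvector
    have hTV : T V = μ • V := hV.apply_eq_smul
    have hV0 : V ≠ 0 := hV.2
    obtain ⟨i, j, hij⟩ : ∃ i j, V i j ≠ 0 := by
      by_contra hc
      push Not at hc
      exact hV0 (by ext i j; simpa using hc i j)
    set X : ℕ → Matrix (Fin n) (Fin n) ℝ := fun k => (T ^ k) (V * Vᵀ + 1) with hX
    have hXs : ∀ k, X (k + 1) = T (X k) := by
      intro k
      simp only [hX, pow_succ', Module.End.mul_apply]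
    have hXp : ∀ k, (X k).PosSemidef := by
      intro k
      induction k with
      | zero =>
        have : (V * Vᵀ).PosSemidef := by simpa using posSemidef_self_mul_conjTranspose V
        simpa [hX] using this.add PosSemidef.one
      | succ k ih => rw [hXs]; exact calT_psd A A' B B' al be hal hbe L _ ih
    have hXd : ∀ k, Dom V (X k) := by
      intro k
      induction k with
      | zero => simpa [hX] using dom_init V
      | succ k ih =>
        rw [hXs]
        refine dom_scale hcon ?_
        rw [← hTV]
        exact dom_calT A A' B B' al be hal hbe L _ _ ih
    have htr : ∀ k, |V i j| ≤ (X k).trace := by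
      intro k
      have hd : ∀ a, X k a a ≤ (X k).trace := by
        intro a
        rw [Matrix.trace]
        exact Finset.single_le_sum (f := fun a => X k a a) (fun b _ => (hXp k).diag_nonneg)
          (Finset.mem_univ a)
      have h1 := hXd k (Pi.single i 1) (Pi.single j 1)
      have h2 := hXd k (-Pi.single i 1) (Pi.single j 1)
      simp only [neg_dotProduct, Matrix.mulVec_neg, dotProduct_neg, neg_neg] at h2
      simp only [Matrix.mulVec_single_one, single_one_dotProduct, Matrix.col_apply] at h1 h2
      rcases abs_cases (V i j) with h | h <;> linarith [h.1, hd i, hd j]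
    have hdec : ∀ k, (E * X (k + 1)).trace ≤ (E * X k).trace - |V i j| := by
      intro k
      have h1 := trace_mul_psd_nonneg hE1 (hXp k)
      rw [Matrix.sub_mul, Matrix.sub_mul, Matrix.trace_sub, Matrix.trace_sub, ← trace_adj,
        Matrix.one_mul] at h1
      rw [hXs]
      linarith [htr k]
    have hdec2 : ∀ k : ℕ, (E * X k).trace ≤ (E * X 0).trace - k * |V i j| := by
      intro k
      induction k with
      | zero => simp
      | succ k ih => push_cast; linarith [hdec k]
    obtain ⟨k, hk⟩ := exists_nat_gt ((E * X 0).trace / |V i j|)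
    rw [div_lt_iff₀ (abs_pos.mpr hij)] at hk
    linarith [hdec2 k, trace_mul_psd_nonneg hE (hXp k)]
  have hfin : (spectrum ℝ T).Finite := Module.End.finite_spectrum T
  show spectralRadius ℝ T < 1
  unfold spectralRadius
  have : (⨆ k ∈ spectrum ℝ T, (‖k‖₊ : ENNReal)) = hfin.toFinset.sup (fun k => (‖k‖₊ : ENNReal)) := by
    rw [Finset.sup_eq_iSup]
    simp
  rw [this, Finset.sup_lt_iff (by simp)]
  intro k hk
  have h1 := hev k (by simpa using hk)
  rw [← Real.norm_eq_abs] at h1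
  have h3 : ‖k‖₊ < 1 := by exact_mod_cast h1
  exact_mod_cast h3

lemma exists_smul_sub_psd {k : ℕ} {R N : Matrix (Fin k) (Fin k) ℝ} (hR : R.PosDef)
    (hN : Nᵀ = N) : ∃ c : ℝ, 0 < c ∧ (c • R - N).PosSemidef := by
  have hRt : Rᵀ = R := ((psd_iff _).mp hR.posSemidef).1
  have hpos : ∀ x : Fin k → ℝ, x ≠ 0 → 0 < x ⬝ᵥ (R *ᵥ x) := fun x hx => by
    simpa using hR.dotProduct_mulVec_pos hx
  have hcont : ContinuousOn (fun x : Fin k → ℝ => (x ⬝ᵥ (N *ᵥ x)) / (x ⬝ᵥ (R *ᵥ x)))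
      (Metric.sphere 0 1) := by
    refine ContinuousOn.div (by fun_prop) (by fun_prop) ?_
    intro x hx
    refine (hpos x ?_).ne'
    rintro rfl
    simp at hx
  obtain ⟨c, hc⟩ := ((isCompact_sphere (0 : Fin k → ℝ) 1).image_of_continuousOn hcont).bddAbove
  refine ⟨max c 1, by positivity, (psd_iff _).mpr ⟨?_, ?_⟩⟩
  · rw [Matrix.transpose_sub, Matrix.transpose_smul, hRt, hN]
  · intro x
    rw [Matrix.sub_mulVec, Matrix.smul_mulVec, dotProduct_sub, dotProduct_smul, smul_eq_mul,
      sub_nonneg]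
    by_cases hx : x = 0
    · simp [hx]
    have hxn : ‖x‖ ≠ 0 := by simpa using hx
    have h1 := hc ⟨‖x‖⁻¹ • x, by simp [norm_smul, hxn], rfl⟩
    simp only [Matrix.mulVec_smul, dotProduct_smul, smul_dotProduct, smul_eq_mul] at h1
    have h2 : x ⬝ᵥ (N *ᵥ x) / (x ⬝ᵥ (R *ᵥ x)) ≤ c := by
      have hi : ‖x‖⁻¹ ≠ 0 := inv_ne_zero hxn
      rwa [mul_div_mul_left _ _ hi, mul_div_mul_left _ _ hi] at h1
    rw [div_le_iff₀ (hpos x hx)] at h2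
    exact h2.trans (mul_le_mul_of_nonneg_right (le_max_left _ _) (hpos x hx).le)

lemma calTstar_expand (A : Matrix (Fin n) (Fin n) ℝ) (A' : Fin p → Matrix (Fin n) (Fin n) ℝ)
    (B : Matrix (Fin n) (Fin m) ℝ) (B' : Fin q → Matrix (Fin n) (Fin m) ℝ)
    (al : Fin p → ℝ) (be : Fin q → ℝ) (R : Matrix (Fin m) (Fin m) ℝ)
    (L : Matrix (Fin m) (Fin n) ℝ) (P : Matrix (Fin n) (Fin n) ℝ) :
    calTstar A A' B B' al be L P + Lᵀ * R * L =
      Aᵀ * P * A + ∑ i, al i • ((A' i)ᵀ * P * A' i) + (Lᵀ * (Bᵀ * P * A) + Aᵀ * P * B * L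
      + Lᵀ * (R + Bᵀ * P * B + ∑ j, be j • ((B' j)ᵀ * P * B' j)) * L) := by
  rw [calTstar_apply]
  simp only [Matrix.transpose_add, Matrix.transpose_mul, Matrix.mul_add, Matrix.add_mul,
    Matrix.mul_sum, Matrix.sum_mul, Matrix.mul_smul, Matrix.smul_mul, Matrix.mul_assoc]
  abel

lemma S_posDef (B : Matrix (Fin n) (Fin m) ℝ) (B' : Fin q → Matrix (Fin n) (Fin m) ℝ)
    (be : Fin q → ℝ) (hbe : ∀ j, 0 ≤ be j) (R : Matrix (Fin m) (Fin m) ℝ) (hR : R.PosDef)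
    (P : Matrix (Fin n) (Fin n) ℝ) (hP : P.PosSemidef) :
    (R + Bᵀ * P * B + ∑ j, be j • ((B' j)ᵀ * P * B' j)).PosDef :=
  (hR.add_posSemidef (psd_conj hP B)).add_posSemidef
    (posSemidef_sum _ fun j _ => (psd_conj hP _).smul (hbe j))

/-- Completion of squares. -/
lemma complete_sq {S : Matrix (Fin m) (Fin m) ℝ} (hS : Sᵀ = S) (F : Matrix (Fin m) (Fin n) ℝ)
    (G L : Matrix (Fin m) (Fin n) ℝ) (hG : S * G = -F) :
    Lᵀ * F + Fᵀ * L + Lᵀ * S * L = (L - G)ᵀ * S * (L - G) - Gᵀ * S * G := by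
  have hF : F = -(S * G) := by rw [hG, neg_neg]
  subst hF
  simp only [Matrix.transpose_neg, Matrix.transpose_mul, hS, Matrix.transpose_sub, Matrix.mul_sub,
    Matrix.sub_mul, Matrix.mul_neg, Matrix.neg_mul, Matrix.mul_assoc]
  abel

lemma riccati_id (A : Matrix (Fin n) (Fin n) ℝ) (A' : Fin p → Matrix (Fin n) (Fin n) ℝ)
    (B : Matrix (Fin n) (Fin m) ℝ) (B' : Fin q → Matrix (Fin n) (Fin m) ℝ)
    (al : Fin p → ℝ) (be : Fin q → ℝ) (hbe : ∀ j, 0 ≤ be j)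
    (R : Matrix (Fin m) (Fin m) ℝ) (hR : R.PosDef)
    (P : Matrix (Fin n) (Fin n) ℝ) (hP : P.PosSemidef) (S : Matrix (Fin m) (Fin m) ℝ)
    (hS : S = R + Bᵀ * P * B + ∑ j, be j • ((B' j)ᵀ * P * B' j))
    (G : Matrix (Fin m) (Fin n) ℝ) (hG : G = -S⁻¹ * (Bᵀ * P * A)) (L : Matrix (Fin m) (Fin n) ℝ) :
    calTstar A A' B B' al be L P + Lᵀ * R * L =
      Aᵀ * P * A + ∑ i, al i • ((A' i)ᵀ * P * A' i) - Aᵀ * P * B * S⁻¹ * (Bᵀ * P * A)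
        + (L - G)ᵀ * S * (L - G) := by
  have hSp : S.PosDef := hS ▸ S_posDef B B' be hbe R hR P hP
  have hSt : Sᵀ = S := ((psd_iff _).mp hSp.posSemidef).1
  have hPt : Pᵀ = P := ((psd_iff _).mp hP).1
  have hSu : IsUnit S.det := (Matrix.isUnit_iff_isUnit_det _).mp hSp.isUnit
  have hSG : S * G = -(Bᵀ * P * A) := by
    rw [hG, Matrix.neg_mul, Matrix.mul_neg, ← Matrix.mul_assoc S, Matrix.mul_nonsing_inv _ hSu,
      Matrix.one_mul]
  have hFt : (Bᵀ * P * A)ᵀ = Aᵀ * P * B := by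
    simp only [Matrix.transpose_mul, Matrix.transpose_transpose, hPt, Matrix.mul_assoc]
  have h1 := complete_sq hSt (Bᵀ * P * A) G L hSG
  rw [hFt] at h1
  have h2 : Gᵀ * S * G = Aᵀ * P * B * S⁻¹ * (Bᵀ * P * A) := by
    have : Gᵀ = -(Aᵀ * P * B * S⁻¹) := by
      rw [hG, Matrix.neg_mul, Matrix.transpose_neg, Matrix.transpose_mul, hFt,
        Matrix.transpose_nonsing_inv, hSt]
    rw [Matrix.mul_assoc, hSG, this]
    simp
  rw [calTstar_expand, ← hS, h1, h2]
  abel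

lemma young {k l : ℕ} {H : Matrix (Fin k) (Fin k) ℝ} (hH : H.PosSemidef) {ε : ℝ} (hε : 0 < ε)
    (M K : Matrix (Fin k) (Fin l) ℝ) :
    ((1 + ε) • (Mᵀ * H * M) + (1 + ε⁻¹) • (Kᵀ * H * K) - (M + K)ᵀ * H * (M + K)).PosSemidef := by
  have h := (psd_conj hH (ε • M - K)).smul (inv_nonneg.mpr hε.le)
  convert h using 1
  simp only [Matrix.transpose_add, Matrix.transpose_sub, Matrix.transpose_smul, Matrix.mul_add,
    Matrix.add_mul, Matrix.mul_sub, Matrix.sub_mul, Matrix.mul_smul, Matrix.smul_mul, smul_sub,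
    smul_smul, add_smul, one_smul, inv_mul_cancel₀ hε.ne', inv_mul_cancel_left₀ hε.ne']
  abel

lemma compare (A : Matrix (Fin n) (Fin n) ℝ) (A' : Fin p → Matrix (Fin n) (Fin n) ℝ)
    (B : Matrix (Fin n) (Fin m) ℝ) (B' : Fin q → Matrix (Fin n) (Fin m) ℝ)
    (al : Fin p → ℝ) (be : Fin q → ℝ) (hal : ∀ i, 0 ≤ al i) (hbe : ∀ j, 0 ≤ be j)
    (L D : Matrix (Fin m) (Fin n) ℝ) (H : Matrix (Fin n) (Fin n) ℝ) (hH : H.PosSemidef)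
    {ε : ℝ} (hε : 0 < ε) :
    ((1 + ε) • calTstar A A' B B' al be L H
      + (1 + ε⁻¹) • (Dᵀ * (Bᵀ * H * B + ∑ j, be j • ((B' j)ᵀ * H * B' j)) * D)
      - calTstar A A' B B' al be (L + D) H).PosSemidef := by
  have h1 := young hH hε (A + B * L) (B * D)
  have h2 : (∑ i, (ε * al i) • ((A' i)ᵀ * H * A' i)).PosSemidef :=
    posSemidef_sum _ fun i _ => (psd_conj hH _).smul (mul_nonneg hε.le (hal i))
  have h3 : (∑ j, be j • ((1 + ε) • ((B' j * L)ᵀ * H * (B' j * L))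
      + (1 + ε⁻¹) • ((B' j * D)ᵀ * H * (B' j * D))
      - (B' j * L + B' j * D)ᵀ * H * (B' j * L + B' j * D))).PosSemidef :=
    posSemidef_sum _ fun j _ => (young hH hε _ _).smul (hbe j)
  convert (h1.add h2).add h3 using 1
  have e1 : A + B * (L + D) = A + B * L + B * D := by rw [Matrix.mul_add, add_assoc]
  have e2 : ∀ j, B' j * (L + D) = B' j * L + B' j * D := fun j => Matrix.mul_add _ _ _
  have e3 : Dᵀ * (Bᵀ * H * B + ∑ j, be j • ((B' j)ᵀ * H * B' j)) * D
      = (B * D)ᵀ * H * (B * D) + ∑ j, be j • ((B' j * D)ᵀ * H * (B' j * D)) := by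
    simp only [Matrix.transpose_mul, Matrix.mul_add, Matrix.add_mul,
      Matrix.mul_sum, Matrix.sum_mul, Matrix.mul_smul, Matrix.smul_mul, Matrix.mul_assoc]
  rw [e3, calTstar_apply, calTstar_apply, e1]
  simp only [e2, smul_add, smul_sub, Finset.sum_add_distrib, Finset.sum_sub_distrib,
    Finset.smul_sum, add_smul, one_smul, mul_smul, smul_comm (be _)]
  abel

lemma adm_improve (A : Matrix (Fin n) (Fin n) ℝ) (A' : Fin p → Matrix (Fin n) (Fin n) ℝ)
    (B : Matrix (Fin n) (Fin m) ℝ) (B' : Fin q → Matrix (Fin n) (Fin m) ℝ)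
    (al : Fin p → ℝ) (be : Fin q → ℝ) (hal : ∀ i, 0 ≤ al i) (hbe : ∀ j, 0 ≤ be j)
    (R : Matrix (Fin m) (Fin m) ℝ) (hR : R.PosDef)
    (L D : Matrix (Fin m) (Fin n) ℝ) (hadm : Admissible A A' B B' al be L)
    (P : Matrix (Fin n) (Fin n) ℝ) (hP : P.PosSemidef)
    (hW : (P - calTstar A A' B B' al be (L + D) P - Dᵀ * R * D).PosSemidef) :
    Admissible A A' B B' al be (L + D) := by
  obtain ⟨H, hH⟩ := adm_surj_star A A' B B' al be L hadm ((2 : ℝ) • 1)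
  have hHp : H.PosSemidef := by
    refine adm_lyap A A' B B' al be hal hbe L hadm H ?_
    rw [hH]
    exact PosSemidef.one.smul (by norm_num)
  obtain ⟨d, hd, hd'⟩ := exists_smul_sub_psd (R := (1 : Matrix (Fin n) (Fin n) ℝ)) PosDef.one
    ((psd_iff _).mp (calTstar_psd A A' B B' al be hal hbe L H hHp)).1
  set ε := d⁻¹ with hε'
  have hε : 0 < ε := inv_pos.mpr hd
  have h2 : ((1 : Matrix (Fin n) (Fin n) ℝ) - ε • calTstar A A' B B' al be L H).PosSemidef := by
    have := hd'.smul hε.le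
    rwa [smul_sub, smul_smul, inv_mul_cancel₀ hd.ne', one_smul] at this
  have h1 := compare A A' B B' al be hal hbe L D H hHp hε
  set N := Bᵀ * H * B + ∑ j, be j • ((B' j)ᵀ * H * B' j) with hN
  have hNp : N.PosSemidef := (psd_conj hHp B).add
    (posSemidef_sum _ fun j _ => (psd_conj hHp _).smul (hbe j))
  obtain ⟨c, hc, hc'⟩ := exists_smul_sub_psd hR
    ((psd_iff _).mp (hNp.smul (show 0 ≤ 1 + ε⁻¹ by positivity))).1
  have h3 := psd_conj hc' D
  have h4 := hW.smul hc.le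
  refine adm_of_lyap A A' B B' al be hal hbe (L + D) (H + c • P) (hHp.add (hP.smul hc.le)) ?_
  convert ((h1.add h2).add h3).add h4 using 1
  have h5 : H = calTstar A A' B B' al be L H + (2 : ℝ) • 1 := by rw [← hH]; abel
  rw [map_add, map_smul]
  generalize calTstar A A' B B' al be L H = T0 at *
  generalize calTstar A A' B B' al be (L + D) H = T1 at *
  rw [h5]
  simp only [Matrix.mul_sub, Matrix.sub_mul, Matrix.mul_smul, Matrix.smul_mul, smul_sub,
    Matrix.mul_add, Matrix.add_mul, add_smul, one_smul, two_smul]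
  abel

end helpers

theorem stmt11 {n m p q : ℕ} (hn : 0 < n) (hm : 0 < m)
    (A : Matrix (Fin n) (Fin n) ℝ) (A' : Fin p → Matrix (Fin n) (Fin n) ℝ)
    (B : Matrix (Fin n) (Fin m) ℝ) (B' : Fin q → Matrix (Fin n) (Fin m) ℝ)
    (al : Fin p → ℝ) (be : Fin q → ℝ) (hal : ∀ i, 0 ≤ al i) (hbe : ∀ j, 0 ≤ be j)
    (Q : Matrix (Fin n) (Fin n) ℝ) (hQ : Q.PosSemidef)
    (R : Matrix (Fin m) (Fin m) ℝ) (hR : R.PosDef)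
    (L0 : Matrix (Fin m) (Fin n) ℝ) (hadm0 : Admissible A A' B B' al be L0)
    (P0 : Matrix (Fin n) (Fin n) ℝ)
    (hP0 : P0 = calTstar A A' B B' al be L0 P0 + Q + L0ᵀ * R * L0)
    (L1 : Matrix (Fin m) (Fin n) ℝ)
    (hL1 : L1 = -(R + Bᵀ * P0 * B + ∑ j, be j • ((B' j)ᵀ * P0 * B' j))⁻¹ * (Bᵀ * P0 * A)) :
    Admissible A A' B B' al be L1 ∧
    ∀ P1 : Matrix (Fin n) (Fin n) ℝ,
      P1 = calTstar A A' B B' al be L1 P1 + Q + L1ᵀ * R * L1 →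
      (P0 - P1).PosSemidef ∧
      ∀ Pstar : Matrix (Fin n) (Fin n) ℝ, Pstar.PosSemidef →
        Pstar = Q + Aᵀ * Pstar * A + (∑ i, al i • ((A' i)ᵀ * Pstar * A' i)) -
          Aᵀ * Pstar * B *
            (R + Bᵀ * Pstar * B + ∑ j, be j • ((B' j)ᵀ * Pstar * B' j))⁻¹ *
            (Bᵀ * Pstar * A) →
        (P1 - Pstar).PosSemidef ∧ (P0 - Pstar).PosSemidef := by
  have hLRL : ∀ L : Matrix (Fin m) (Fin n) ℝ, (Lᵀ * R * L).PosSemidef :=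
    fun L => psd_conj hR.posSemidef L
  have hP0p : P0.PosSemidef := by
    refine adm_lyap A A' B B' al be hal hbe L0 hadm0 P0 ?_
    have : P0 - calTstar A A' B B' al be L0 P0 = Q + L0ᵀ * R * L0 := by
      nth_rewrite 1 [hP0]
      abel
    rw [this]
    exact hQ.add (hLRL L0)
  -- the basic identity for `P0`
  set S := R + Bᵀ * P0 * B + ∑ j, be j • ((B' j)ᵀ * P0 * B' j) with hS
  have hid := riccati_id A A' B B' al be hbe R hR P0 hP0p S hS L1 hL1
  have hSp : S.PosDef := S_posDef B B' be hbe R hR P0 hP0p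
  have hP0e : P0 = calTstar A A' B B' al be L1 P0 + Q + L1ᵀ * R * L1
      + (L0 - L1)ᵀ * S * (L0 - L1) := by
    have h0 := hid L0
    have h1 := hid L1
    rw [sub_self, Matrix.mul_zero, add_zero] at h1
    rw [← h1] at h0
    calc P0 = (calTstar A A' B B' al be L0 P0 + L0ᵀ * R * L0) + Q := by
          nth_rewrite 1 [hP0]
          abel
      _ = _ := by
          rw [h0]
          abel
  have hadm1 : Admissible A A' B B' al be L1 := by
    have hL : L1 = L0 + (L1 - L0) := by abel
    have := adm_improve A A' B B' al be hal hbe R hR L0 (L1 - L0) hadm0 P0 hP0p (by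
      rw [← hL]
      have hD : (L1 - L0)ᵀ * R * (L1 - L0) = (L0 - L1)ᵀ * R * (L0 - L1) := by
        rw [← neg_sub L0 L1, Matrix.transpose_neg, Matrix.neg_mul, Matrix.neg_mul, Matrix.mul_neg,
          neg_neg]
      have hSR : (S - R).PosSemidef := by
        have : S - R = Bᵀ * P0 * B + ∑ j, be j • ((B' j)ᵀ * P0 * B' j) := by
          rw [hS]
          abel
        rw [this]
        exact (psd_conj hP0p B).add (posSemidef_sum _ fun j _ => (psd_conj hP0p _).smul (hbe j))
      have h1 := (hQ.add (hLRL L1)).add (psd_conj hSR (L0 - L1))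
      convert h1 using 1
      rw [hD, Matrix.mul_sub _ S R, Matrix.sub_mul _ _ (L0 - L1)]
      nth_rewrite 1 [hP0e]
      abel)
    rwa [← hL] at this
  refine ⟨hadm1, fun P1 hP1 => ?_⟩
  have h01 : (P0 - P1).PosSemidef := by
    refine adm_lyap A A' B B' al be hal hbe L1 hadm1 _ ?_
    have : P0 - P1 - calTstar A A' B B' al be L1 (P0 - P1) = (L0 - L1)ᵀ * S * (L0 - L1) := by
      rw [map_sub]
      nth_rewrite 1 [hP0e]
      nth_rewrite 1 [hP1]
      abel
    rw [this]
    exact psd_conj hSp.posSemidef _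
  refine ⟨h01, fun Pstar hPs hSARE => ?_⟩
  have h1s : (P1 - Pstar).PosSemidef := by
    refine adm_lyap A A' B B' al be hal hbe L1 hadm1 _ ?_
    set Ss := R + Bᵀ * Pstar * B + ∑ j, be j • ((B' j)ᵀ * Pstar * B' j) with hSs
    have hids := riccati_id A A' B B' al be hbe R hR Pstar hPs Ss hSs _ rfl L1
    have hSsp : Ss.PosDef := S_posDef B B' be hbe R hR Pstar hPs
    set G := -Ss⁻¹ * (Bᵀ * Pstar * A) with hG
    have e : Pstar = calTstar A A' B B' al be L1 Pstar + L1ᵀ * R * L1 + Q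
        - (L1 - G)ᵀ * Ss * (L1 - G) := by
      rw [hids]
      nth_rewrite 1 [hSARE]
      abel
    have : P1 - Pstar - calTstar A A' B B' al be L1 (P1 - Pstar)
        = (L1 - G)ᵀ * Ss * (L1 - G) := by
      rw [map_sub]
      nth_rewrite 1 [e]
      nth_rewrite 1 [hP1]
      abel
    rw [this]
    exact psd_conj hSsp.posSemidef _
  refine ⟨h1s, ?_⟩
  have := h01.add h1s
  rwa [sub_add_sub_cancel] at this
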